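/- arXiv:2507.06324 — 5 statements merged into one kernel-verified Lean document; each statement's English description precedes it below -/
import Mathlib

section
/- Let R be a commutative ring, D, p ∈ ℕ, and let A : (Fin p → Fin D) → R be totally antisymmetric, i.e. A i = 0 whenever i : Fin p → Fin D is not injective, and A (i ∘ σ) = Equiv.Perm.sign σ • A i for every permutation σ of Fin p. Then for every j : Fin p → Fin D, ∑_{i : Fin p → Fin D} δ(j,i) · A i = p! · A j. -/
/-- Generalized Kronecker delta: the determinant of the `p × p` matrix whose
`(a,b)` entry is `1` if `j a = i b` and `0` otherwise. -/
def gdelta (R : Type*) [CommRing R] {p D : ℕ} (j i : Fin p → Fin D) : R :=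
  Matrix.det (Matrix.of fun a b => if j a = i b then (1 : R) else 0)

/-! By the Leibniz formula, contraction with the generalized Kronecker delta is unnormalized
antisymmetrization `A ↦ ∑ σ, sign σ • A (j ∘ σ)`. On an antisymmetric `A` the two signs cancel,
so each of the `p!` permutations contributes `A j`. -/

section Antisymmetrization

open Equiv.Perm (sign)

variable {ι κ R M : Type*} [Fintype ι] [DecidableEq ι] [AddCommGroup M]

theorem det_submatrix_one_eq_sum_perm [DecidableEq κ] [CommRing R] (j i : ι → κ) :
    ((1 : Matrix κ κ R).submatrix j i).det =
      ∑ σ : Equiv.Perm ι, if j ∘ σ = i then ((sign σ : ℤ) : R) else 0 := by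
  simp only [Matrix.det_apply', Matrix.submatrix_apply, Matrix.one_apply, Fintype.prod_ite_zero,
    Finset.prod_const_one, mul_ite, mul_one, mul_zero, funext_iff, Function.comp_apply]

theorem sum_det_submatrix_one_smul [Fintype κ] [DecidableEq κ] [CommRing R] [Module R M]
    (A : (ι → κ) → M) (j : ι → κ) :
    ∑ i : ι → κ, ((1 : Matrix κ κ R).submatrix j i).det • A i =
      ∑ σ : Equiv.Perm ι, sign σ • A (j ∘ σ) := by
  simp only [det_submatrix_one_eq_sum_perm, Finset.sum_smul, ite_smul, zero_smul]
  rw [Finset.sum_comm]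
  simp only [Finset.sum_ite_eq, Finset.mem_univ, if_true, Int.cast_smul_eq_zsmul, Units.smul_def]

theorem sum_perm_sign_smul_comp {A : (ι → κ) → M} {j : ι → κ}
    (hA : ∀ σ : Equiv.Perm ι, A (j ∘ σ) = sign σ • A j) :
    ∑ σ : Equiv.Perm ι, sign σ • A (j ∘ σ) = (Fintype.card ι).factorial • A j := by
  have sign_smul_comp (σ : Equiv.Perm ι) : sign σ • A (j ∘ σ) = A j := by
    rw [hA, smul_smul, Int.units_mul_self, one_smul]
  simp only [sign_smul_comp, Finset.sum_const, Finset.card_univ, Fintype.card_perm]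

theorem gdelta_contract_antisymm_general [Fintype κ] [DecidableEq κ] [CommRing R] [Module R M]
    {A : (ι → κ) → M} {j : ι → κ}
    (hA : ∀ σ : Equiv.Perm ι, A (j ∘ σ) = sign σ • A j) :
    ∑ i : ι → κ, ((1 : Matrix κ κ R).submatrix j i).det • A i =
      (Fintype.card ι).factorial • A j :=
  (sum_det_submatrix_one_smul A j).trans (sum_perm_sign_smul_comp hA)

end Antisymmetrization

theorem gdelta_eq_det_submatrix_one (R : Type*) [CommRing R] {p D : ℕ} (j i : Fin p → Fin D) :
    gdelta R j i = ((1 : Matrix (Fin D) (Fin D) R).submatrix j i).det :=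
  rfl

/-- Contracting the generalized Kronecker delta with a totally antisymmetric
tensor `A` reproduces `p! • A`. -/
theorem gdelta_contract_antisymm (R : Type*) [CommRing R] (D p : ℕ)
    (A : (Fin p → Fin D) → R)
    (hA₀ : ∀ i : Fin p → Fin D, ¬ Function.Injective i → A i = 0)
    (hAσ : ∀ (i : Fin p → Fin D) (σ : Equiv.Perm (Fin p)),
      A (i ∘ σ) = (Equiv.Perm.sign σ : ℤ) • A i)
    (j : Fin p → Fin D) :
    ∑ i : Fin p → Fin D, gdelta R j i * A i = (p.factorial : R) * A j := by
  simpa only [gdelta_eq_det_submatrix_one, smul_eq_mul, nsmul_eq_mul, Fintype.card_fin] using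
    gdelta_contract_antisymm_general (R := R) (hAσ j)
end

section
/- Let D, p, q ∈ ℕ with D = p + q. For all k, j : Fin q → Fin D, the partial trace of the generalized Kronecker delta over the first p index pairs satisfies ∑_{i : Fin p → Fin D} δ(i ⊕ k, i ⊕ j) = p! · δ(k, j), as an identity in ℤ (or any commutative ring). (In unit-weight conventions this is δ^{i₁⋯i_p k₁⋯k_q}_{i₁⋯i_p j₁⋯j_q} = (p! q!/D!) δ^{k₁⋯k_q}_{j₁⋯j_q}.) -/
/-!
The delta `δ(k, j)` is the minor of the identity matrix with rows `k` and columns `j`. For such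
`n × n` minors of any idempotent matrix `A`, tracing out one extra index pair multiplies the minor
by `tr A - n`: with `M = A[k, j]`, expanding along the new row and column gives
`∑ x, (A x x * det M - A[x, j] * adj M * A[k, x]) = tr A * det M - tr (adj M * (A * A)[k, j])`,
and `A * A = A` turns the last trace into `tr (adj M * M) = n * det M`. Iterating from `n = q`
yields the falling factorial `(tr A - q) (tr A - q - 1) ⋯ (tr A - q - p + 1)`.
-/

section Minors

open Matrix

variable {R : Type*} [CommRing R]

theorem det_submatrix_succ_succAbove_succ {n : ℕ} (M : Matrix (Fin (n + 1)) (Fin (n + 1)) R)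
    (b : Fin n) :
    (M.submatrix Fin.succ b.succ.succAbove).det =
      (-1) ^ (b : ℕ) * cramer (M.submatrix Fin.succ Fin.succ) (fun a => M a.succ 0) b := by
  cases n with
  | zero => exact b.elim0
  | succ n =>
    -- The border column, put in the slot of the deleted column `b`, is cycled back to the front.
    have hcycle : M.submatrix Fin.succ b.succ.succAbove =
        ((M.submatrix Fin.succ Fin.succ).updateCol b fun a => M a.succ 0).submatrix id
          b.cycleRange.symm := by
      ext a c
      cases c using Fin.cases <;> simp
    rw [hcycle, det_permute', Equiv.Perm.sign_symm, Fin.sign_cycleRange, cramer_apply]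
    push_cast
    rfl

theorem det_succ_eq_sub_dotProduct_adjugate_mulVec {n : ℕ}
    (M : Matrix (Fin (n + 1)) (Fin (n + 1)) R) :
    M.det = M 0 0 * (M.submatrix Fin.succ Fin.succ).det -
      (fun b => M 0 b.succ) ⬝ᵥ
        (M.submatrix Fin.succ Fin.succ).adjugate *ᵥ fun a => M a.succ 0 := by
  have hsign (b : Fin n) : (-1 : R) ^ (b.succ : ℕ) * (-1) ^ (b : ℕ) = -1 := by
    rw [← pow_add, Fin.val_succ, Odd.neg_one_pow ⟨b, by ring⟩]
  have hterm (b : Fin n) :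
      (-1) ^ (b.succ : ℕ) * M 0 b.succ * (M.submatrix Fin.succ b.succ.succAbove).det =
        -(M 0 b.succ *
          cramer (M.submatrix Fin.succ Fin.succ) (fun a => M a.succ 0) b) := by
    rw [det_submatrix_succ_succAbove_succ]
    linear_combination
      M 0 b.succ * cramer (M.submatrix Fin.succ Fin.succ) (fun a => M a.succ 0) b * hsign b
  rw [det_succ_row_zero, Fin.sum_univ_succ, ← cramer_eq_adjugate_mulVec, dotProduct,
    sub_eq_add_neg, ← Finset.sum_neg_distrib]
  simp only [hterm, Fin.succAbove_zero, Fin.val_zero, pow_zero, one_mul]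

variable {α : Type*} [Fintype α] {A : Matrix α α R}

theorem sum_det_submatrix_cons (hA : IsIdempotentElem A) {n : ℕ} (k j : Fin n → α) :
    ∑ x, (A.submatrix (Fin.cons x k : Fin (n + 1) → α) (Fin.cons x j : Fin (n + 1) → α)).det =
      (A.trace - n) * (A.submatrix k j).det := by
  set M := A.submatrix k j
  have hborder (x : α) :
      (A.submatrix (Fin.cons x k : Fin (n + 1) → α) (Fin.cons x j : Fin (n + 1) → α)).det =
        A x x * M.det - (A.submatrix id j * (M.adjugate * A.submatrix k id)) x x :=
    det_succ_eq_sub_dotProduct_adjugate_mulVec _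
  have hmul : A.submatrix k id * A.submatrix id j = M := by
    rw [← submatrix_mul _ _ _ _ _ Function.bijective_id, hA.eq]
  have htrace : (A.submatrix id j * (M.adjugate * A.submatrix k id)).trace = n * M.det := by
    rw [trace_mul_comm, Matrix.mul_assoc, hmul, adjugate_mul, trace_smul, trace_one,
      Fintype.card_fin, smul_eq_mul, mul_comm]
  calc
    _ = A.trace * M.det - (A.submatrix id j * (M.adjugate * A.submatrix k id)).trace := by
      simp only [hborder, Finset.sum_sub_distrib, ← Finset.sum_mul, trace, diag_apply]
    _ = (A.trace - n) * M.det := by rw [htrace, sub_mul]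

theorem sum_det_submatrix_append (hA : IsIdempotentElem A) (p : ℕ) {q : ℕ} (k j : Fin q → α) :
    ∑ i : Fin p → α, (A.submatrix (Fin.append i k) (Fin.append i j)).det =
      (descPochhammer R p).eval (A.trace - q) * (A.submatrix k j).det := by
  induction p with
  | zero =>
    have hnil (i : Fin 0 → α) (u : Fin q → α) :
        Fin.append i u = u ∘ finCongr (Nat.zero_add q) :=
      Fin.append_left_nil i u rfl
    simp only [hnil, ← submatrix_submatrix, det_submatrix_equiv_self, Fintype.sum_unique,
      descPochhammer_zero, Polynomial.eval_one, one_mul]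
  | succ p ih =>
    have hcons (x : α) (i : Fin p → α) (u : Fin q → α) :
        Fin.append (Fin.cons x i : Fin (p + 1) → α) u =
          (Fin.cons x (Fin.append i u) : Fin (p + q + 1) → α) ∘
            finCongr (Nat.add_right_comm p 1 q) :=
      Fin.append_cons x i u
    calc
      _ = ∑ i : Fin p → α, ∑ x, (A.submatrix (Fin.append (Fin.cons x i : Fin (p + 1) → α) k)
            (Fin.append (Fin.cons x i : Fin (p + 1) → α) j)).det := by
        rw [← (Fin.consEquiv fun _ => α).sum_comp, Fintype.sum_prod_type_right]
        rfl
      _ = ∑ i : Fin p → α, (A.trace - (p + q : ℕ)) *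
            (A.submatrix (Fin.append i k) (Fin.append i j)).det := by
        simp only [hcons, ← submatrix_submatrix, det_submatrix_equiv_self,
          sum_det_submatrix_cons hA]
      _ = (descPochhammer R (p + 1)).eval (A.trace - q) * (A.submatrix k j).det := by
        rw [← Finset.mul_sum, ih, descPochhammer_succ_eval]
        push_cast
        ring

end Minors

theorem gdelta_partial_trace_general (R : Type*) [CommRing R] (D p q : ℕ)
    (k j : Fin q → Fin D) :
    ∑ i : Fin p → Fin D, gdelta R (Fin.append i k) (Fin.append i j) =
      (descPochhammer R p).eval ((D : R) - q) * gdelta R k j := by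
  have hone : IsIdempotentElem (1 : Matrix (Fin D) (Fin D) R) := one_mul 1
  simpa only [gdelta_eq_det_submatrix_one, Matrix.trace_one, Fintype.card_fin] using
    sum_det_submatrix_append hone p k j

/-- Partial trace of the generalized Kronecker delta over the first `p` index pairs:
`∑ i, δ(i ⊕ k, i ⊕ j) = p! · δ(k, j)` in dimension `D = p + q`. -/
theorem gdelta_partial_trace (D p q : ℕ) (hD : D = p + q)
    (k j : Fin q → Fin D) :
    ∑ i : Fin p → Fin D, gdelta ℤ (Fin.append i k) (Fin.append i j)
      = (p.factorial : ℤ) * gdelta ℤ k j := by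
  rw [gdelta_partial_trace_general, show (D : ℤ) - q = p by omega,
    descPochhammer_eval_eq_descFactorial, Nat.descFactorial_self]
end

section
/- Let R be a commutative ring, D, p, q ∈ ℕ with D = p + q, and A : Matrix (Fin D) (Fin D) R. Then for all n, k : Fin q → Fin D: ∑_{i : Fin p → Fin D} ∑_{m : Fin p → Fin D} ∑_{j : Fin q → Fin D} ε(i ⊕ j) · ε(m ⊕ n) · (∏_{a : Fin p} A (i a) (m a)) · (∏_{b : Fin q} A (j b) (k b)) = p! · det A · δ(n, k). (In unit-weight conventions this is ε_{i₁⋯i_p j₁⋯j_q} ε_{m₁⋯m_p n₁⋯n_q} A_{i₁m₁}⋯A_{i_p m_p} A_{j₁k₁}⋯A_{j_q k_q} = p! q! det A · δ^{k₁⋯k_q}_{n₁⋯n_q}.) -/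
/-- Levi-Civita symbol: the determinant of the `D × D` matrix whose `(a,b)` entry is
`1` if `i a = b` and `0` otherwise. -/
def eps (R : Type*) [CommRing R] {D : ℕ} (i : Fin D → Fin D) : R :=
  Matrix.det (Matrix.of fun a b => if i a = b then (1 : R) else 0)

/-!
Both symbols are determinants of submatrices of the identity, `ε(i) = det 1[i, ·]` and
`δ(j, i) = det 1[j, i]`. For fixed `m`, the sum over all `(i, j)` is the row expansion of the
determinant of the matrix formed by the columns `m ⊕ k` of `A`, that is `det A · ε(m ⊕ k)`. What
remains is `∑ₘ ε(m ⊕ n) ε(m ⊕ k) = ∑ₘ δ(m ⊕ n, m ⊕ k)`. A summand vanishes when `m ⊕ n` has a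
repeated entry; otherwise its matrix is block triangular with blocks `1` and `1[n, k]`, so that it
equals `δ(n, k)`. If `n` has distinct entries, the tuples `m` of the second kind are the `p!`
orderings of the complement of `n`; otherwise `δ(n, k) = 0`.
-/

open Finset Function Matrix

theorem det_mul_eq_sum_prod_mul_det_submatrix {R ι κ : Type*} [CommRing R] [Fintype ι]
    [DecidableEq ι] [Fintype κ] (M : Matrix ι κ R) (N : Matrix κ ι R) :
    (M * N).det = ∑ l : ι → κ, (∏ a, M a (l a)) * (N.submatrix l id).det := by
  have hrows : M * N = fun a => ∑ x, M a x • N x := by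
    ext a b
    simp [mul_apply, Finset.sum_apply]
  calc (M * N).det
      = detRowAlternating.toMultilinearMap fun a => ∑ x, M a x • N x := congrArg det hrows
    _ = ∑ l : ι → κ, detRowAlternating.toMultilinearMap fun a => M a (l a) • N (l a) :=
        MultilinearMap.map_sum _ _
    _ = ∑ l : ι → κ, (∏ a, M a (l a)) * (N.submatrix l id).det :=
        sum_congr rfl fun _ _ => MultilinearMap.map_smul_univ _ _ _

theorem card_filter_injective_append {α : Type*} [Fintype α] [DecidableEq α] (p : ℕ) {q : ℕ}
    {n : Fin q → α} (hn : Injective n) :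
    #{m : Fin p → α | Injective (Fin.append m n)} = (Fintype.card α - q).descFactorial p := by
  have hcompl : Fintype.card {x // x ∉ Set.range n} = Fintype.card α - q := by
    rw [Fintype.card_subtype_compl, Set.card_range_of_injective hn, Fintype.card_fin]
  let e : {m : Fin p → α // Injective (Fin.append m n)} ≃ (Fin p ↪ {x // x ∉ Set.range n}) :=
    { toFun m :=
        have h := Fin.append_injective_iff.1 m.2
        ⟨fun a => ⟨m.1 a, fun ⟨b, hb⟩ => h.2.2 a b hb.symm⟩,
          fun _ _ hab => h.1 (congrArg Subtype.val hab)⟩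
      invFun f := ⟨fun a => f a, Fin.append_injective_iff.2
        ⟨Subtype.val_injective.comp f.injective, hn, fun a b hab => (f a).2 ⟨b, hab.symm⟩⟩⟩ }
  rw [← Fintype.card_subtype, Fintype.card_congr e, Fintype.card_embedding_eq, hcompl,
    Fintype.card_fin]

theorem sum_sum_append {α M : Type*} [Fintype α] [AddCommMonoid M] {p q : ℕ}
    (f : (Fin (p + q) → α) → M) :
    ∑ i : Fin p → α, ∑ j : Fin q → α, f (Fin.append i j) = ∑ l, f l := by
  rw [← (Fin.appendEquiv p q).sum_comp f, Fintype.sum_prod_type]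
  rfl

section

variable (R : Type*) [CommRing R] {p q D : ℕ}

theorem eps_eq_det_one_submatrix (i : Fin D → Fin D) :
    eps R i = ((1 : Matrix (Fin D) (Fin D) R).submatrix i id).det :=
  rfl

theorem gdelta_eq_det_one_submatrix (j i : Fin p → Fin D) :
    gdelta R j i = ((1 : Matrix (Fin D) (Fin D) R).submatrix j i).det :=
  rfl

theorem eps_mul_eps (u v : Fin D → Fin D) : eps R u * eps R v = gdelta R u v := by
  rw [eps_eq_det_one_submatrix, eps_eq_det_one_submatrix, gdelta_eq_det_one_submatrix,
    ← det_transpose (submatrix 1 v id), ← det_mul, transpose_submatrix, transpose_one,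
    ← submatrix_mul _ _ _ _ _ bijective_id, one_mul]

variable {R} in
theorem sum_eps_mul_prod (A : Matrix (Fin D) (Fin D) R) (c : Fin D → Fin D) :
    ∑ l : Fin D → Fin D, eps R l * ∏ a, A (l a) (c a) = A.det * eps R c :=
  calc ∑ l : Fin D → Fin D, eps R l * ∏ a, A (l a) (c a)
      = ∑ l : Fin D → Fin D, (∏ a, Aᵀ.submatrix c id a (l a)) * (submatrix 1 l id).det :=
        sum_congr rfl fun _ _ => mul_comm _ _
    _ = (Aᵀ.submatrix c id).det := by
        rw [← det_mul_eq_sum_prod_mul_det_submatrix, mul_one]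
    _ = (submatrix 1 c id * Aᵀ).det := by
        rw [← Equiv.coe_refl, one_submatrix_mul, Equiv.refl_symm, Equiv.coe_refl, id_comp]
    _ = A.det * eps R c := by
        rw [det_mul, det_transpose, eps_eq_det_one_submatrix, mul_comm]

theorem gdelta_eq_zero_of_not_injective {u : Fin p → Fin D} (v : Fin p → Fin D)
    (hu : ¬ Injective u) : gdelta R u v = 0 := by
  obtain ⟨a, b, hab, hne⟩ := not_injective_iff.1 hu
  exact det_zero_of_row_eq hne (by ext c; simp [hab])

theorem gdelta_append_append {m : Fin p → Fin D} {n : Fin q → Fin D} (hm : Injective m)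
    (hmn : ∀ a b, m a ≠ n b) (k : Fin q → Fin D) :
    gdelta R (Fin.append m n) (Fin.append m k) = gdelta R n k := by
  let I : Matrix (Fin D) (Fin D) R := 1
  have hblocks :
      (I.submatrix (Fin.append m n) (Fin.append m k)).submatrix finSumFinEquiv finSumFinEquiv
        = fromBlocks 1 (I.submatrix m k) 0 (I.submatrix n k) := by
    ext (a | a) (b | b)
    · simp [I, one_apply, hm.eq_iff]
    · simp
    · simp [I, one_apply, (hmn b a).symm]
    · simp
  rw [gdelta_eq_det_one_submatrix, ← det_submatrix_equiv_self finSumFinEquiv, hblocks,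
    det_fromBlocks_zero₂₁, det_one, one_mul, gdelta_eq_det_one_submatrix]

variable (p) in
-- The truncation of `D - q` is harmless: for `q > D` both sides are `0`, as `n` is not injective.
theorem sum_gdelta_append_append (n k : Fin q → Fin D) :
    ∑ m : Fin p → Fin D, gdelta R (Fin.append m n) (Fin.append m k)
      = (D - q).descFactorial p * gdelta R n k := by
  have hterm (m : Fin p → Fin D) : gdelta R (Fin.append m n) (Fin.append m k)
      = if Injective (Fin.append m n) then gdelta R n k else 0 := by
    split_ifs with h
    · obtain ⟨hm, -, hmn⟩ := Fin.append_injective_iff.1 h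
      exact gdelta_append_append R hm hmn k
    · exact gdelta_eq_zero_of_not_injective R _ h
  by_cases hn : Injective n
  · simp_rw [hterm]
    rw [← sum_filter, sum_const, nsmul_eq_mul, card_filter_injective_append p hn, Fintype.card_fin]
  · simp [hterm, gdelta_eq_zero_of_not_injective R k hn]

end

/-- Theorem 6 of the paper: contracting two Levi-Civita symbols with `D = p + q`
copies of a matrix `A` produces `p! · det A · δ(n, k)`. -/
theorem eps_eps_contract_matrix (R : Type*) [CommRing R] (p q : ℕ)
    (A : Matrix (Fin (p + q)) (Fin (p + q)) R) (n k : Fin q → Fin (p + q)) :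
    ∑ i : Fin p → Fin (p + q), ∑ m : Fin p → Fin (p + q), ∑ j : Fin q → Fin (p + q),
        eps R (Fin.append i j) * eps R (Fin.append m n)
          * (∏ a : Fin p, A (i a) (m a)) * (∏ b : Fin q, A (j b) (k b))
      = (p.factorial : R) * A.det * gdelta R n k := by
  have hcolumns (m : Fin p → Fin (p + q)) :
      ∑ i : Fin p → Fin (p + q), ∑ j : Fin q → Fin (p + q),
        eps R (Fin.append i j) * eps R (Fin.append m n)
          * (∏ a : Fin p, A (i a) (m a)) * (∏ b : Fin q, A (j b) (k b))
      = eps R (Fin.append m n) * (A.det * eps R (Fin.append m k)) := by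
    rw [← sum_eps_mul_prod, ← sum_sum_append]
    simp only [mul_sum, Fin.prod_univ_add, Fin.append_left, Fin.append_right]
    refine sum_congr rfl fun i _ => sum_congr rfl fun j _ => ?_
    ring
  rw [sum_comm, sum_congr rfl fun m _ => hcolumns m]
  simp_rw [mul_left_comm _ A.det, eps_mul_eps]
  rw [← mul_sum, sum_gdelta_append_append, Nat.add_sub_cancel, Nat.descFactorial_self]
  ring
end

section
/- (Adjugate/cofactor identity, eq. (4.14) of the paper with A = g⁻¹.) Let R be a commutative ring, D ≥ 1, and A : Matrix (Fin D) (Fin D) R. Then for all j, r : Fin D: ∑_{a : Fin (D−1) → Fin D} ∑_{b : Fin (D−1) → Fin D} ε(j ::ᵥ a) · ε(r ::ᵥ b) · ∏_{m : Fin (D−1)} A (a m) (b m) = (D−1)! · (adjugate A) r j. In particular, when A = g⁻¹ for a symmetric invertible matrix g over a field, the right-hand side equals (D−1)! · det(g⁻¹) · g j r. -/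
/-!
For fixed `a`, summing over `b` is the multilinear expansion of the determinant of the matrix `B`
with rows `e_r, A (a 0), …, A (a (D - 1))`. When `j ::ᵥ a` is a permutation, these are the rows of
`A.updateRow j e_r` in the order `j ::ᵥ a`, so `det B = ε(j ::ᵥ a) * adjugate A r j`; otherwise
`ε(j ::ᵥ a) = 0`. The left-hand side is therefore `(∑ a, ε(j ::ᵥ a) ^ 2) * adjugate A r j`, and the
first factor counts the `D!` permutations of `Fin (D + 1)` with first value `j`.
-/

open Matrix Function

theorem multilinearMap_apply_eq_sum_prod_smul_single {R M ι : Type*} {κ : ι → Type*}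
    [CommSemiring R] [AddCommMonoid M] [Module R M] [Fintype ι] [DecidableEq ι]
    [∀ k, Fintype (κ k)] [∀ k, DecidableEq (κ k)]
    (f : MultilinearMap R (fun k => κ k → R) M) (v : ∀ k, κ k → R) :
    f v = ∑ i : ∀ k, κ k, (∏ k, v k (i k)) • f fun k => Pi.single (i k) 1 := by
  have expand_coords : v = fun k => ∑ l, v k l • (Pi.single l 1 : κ k → R) :=
    funext fun k => by simpa using ((Pi.basisFun R (κ k)).sum_repr (v k)).symm
  calc
    f v = f fun k => ∑ l, v k l • (Pi.single l 1 : κ k → R) := congrArg f expand_coords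
    _ = ∑ i : ∀ k, κ k, f fun k => v k (i k) • Pi.single (i k) 1 := f.map_sum _
    _ = ∑ i : ∀ k, κ k, (∏ k, v k (i k)) • f fun k => Pi.single (i k) 1 :=
      Finset.sum_congr rfl fun _ _ => f.map_smul_univ _ _

theorem card_injective_vecCons {α : Type*} [Fintype α] [DecidableEq α] (n : ℕ) (x : α) :
    Fintype.card {a : Fin n → α // Injective (vecCons x a)} =
      (Fintype.card α - 1).descFactorial n := by
  let e : {a : Fin n → α // Injective (vecCons x a)} ≃ (Fin n ↪ {y : α // y ≠ x}) :=
    { toFun a := ⟨fun m => ⟨a.1 m, fun h => (Fin.cons_injective_iff.mp a.2).1 ⟨m, h⟩⟩,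
        fun _ _ h => (Fin.cons_injective_iff.mp a.2).2 (congrArg Subtype.val h)⟩
      invFun f := ⟨fun m => f m, Fin.cons_injective_iff.mpr
        ⟨fun ⟨m, h⟩ => (f m).2 h, Subtype.val_injective.comp f.injective⟩⟩ }
  rw [Fintype.card_congr e, Fintype.card_embedding_eq, Fintype.card_fin,
    Fintype.card_subtype_compl, Fintype.card_subtype_eq]

section LeviCivita

variable {R : Type*} [CommRing R] {n : ℕ}

theorem eps_eq_det_submatrix_one (i : Fin n → Fin n) :
    eps R i = ((1 : Matrix (Fin n) (Fin n) R).submatrix i id).det := rfl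

theorem det_submatrix_id_eq_eps_mul (i : Fin n → Fin n) (M : Matrix (Fin n) (Fin n) R) :
    (M.submatrix i id).det = eps R i * M.det := by
  rw [eps_eq_det_submatrix_one, ← det_mul]
  exact congrArg det (one_submatrix_mul i (Equiv.refl _) M).symm

theorem eps_perm (σ : Equiv.Perm (Fin n)) : eps R σ = (Equiv.Perm.sign σ : ℤ) := by
  rw [eps_eq_det_submatrix_one, det_permute, det_one, mul_one]

theorem eps_eq_zero_of_not_injective {i : Fin n → Fin n} (hi : ¬ Injective i) : eps R i = 0 := by
  obtain ⟨a, b, hab, hne⟩ := not_injective_iff.mp hi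
  exact det_zero_of_row_eq hne (funext fun c => by simp only [of_apply, hab])

theorem eps_sq_eq_ite (i : Fin n → Fin n) : eps R i ^ 2 = if Injective i then 1 else 0 := by
  split_ifs with hi
  · obtain ⟨σ, rfl⟩ : ∃ σ : Equiv.Perm (Fin n), σ = i :=
      ⟨Equiv.ofBijective i hi.bijective_of_finite, rfl⟩
    rw [eps_perm, ← Int.cast_pow, Int.isUnit_sq (Equiv.Perm.sign σ).isUnit, Int.cast_one]
  · rw [eps_eq_zero_of_not_injective hi, zero_pow two_ne_zero]

theorem sum_eps_vecCons_sq (j : Fin (n + 1)) :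
    ∑ a : Fin n → Fin (n + 1), eps R (vecCons j a) ^ 2 = n.factorial := by
  simp_rw [eps_sq_eq_ite]
  rw [Finset.sum_boole, ← Fintype.card_subtype, card_injective_vecCons, Fintype.card_fin,
    Nat.add_sub_cancel, Nat.descFactorial_self]

theorem sum_eps_vecCons_mul_prod (r : Fin (n + 1)) (N : Matrix (Fin n) (Fin (n + 1)) R) :
    ∑ b : Fin n → Fin (n + 1), eps R (vecCons r b) * ∏ m, N m (b m) =
      (of (vecCons (Pi.single r 1) N)).det := by
  have eps_eq_det (b : Fin n → Fin (n + 1)) : eps R (vecCons r b) =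
      (of (vecCons (Pi.single r 1) fun m => Pi.single (b m) 1)).det := by
    refine congrArg det (Matrix.ext fun k l => ?_)
    cases k using Fin.cases <;> simp [Pi.single_apply, eq_comm]
  simp_rw [eps_eq_det, mul_comm (det _)]
  exact (multilinearMap_apply_eq_sum_prod_smul_single
    (detRowAlternating.toMultilinearMap.curryLeft (Pi.single r 1)) N).symm

theorem eps_mul_det_vecCons_single (A : Matrix (Fin (n + 1)) (Fin (n + 1)) R)
    (j r : Fin (n + 1)) (a : Fin n → Fin (n + 1)) :
    eps R (vecCons j a) * (of (vecCons (Pi.single r 1) fun m => A (a m))).det =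
      eps R (vecCons j a) ^ 2 * A.adjugate r j := by
  by_cases ha : Injective (vecCons j a)
  · have rows_eq : of (vecCons (Pi.single r 1) fun m => A (a m)) =
        (A.updateRow j (Pi.single r 1)).submatrix (vecCons j a) id := by
      ext k l
      cases k using Fin.cases with
      | zero => simp
      | succ m =>
        have hm : a m ≠ j := fun h => (Fin.cons_injective_iff.mp ha).1 ⟨m, h⟩
        simp [hm]
    rw [rows_eq, det_submatrix_id_eq_eps_mul, adjugate_apply, sq, mul_assoc]
  · rw [eps_eq_zero_of_not_injective ha, zero_mul, zero_pow two_ne_zero, zero_mul]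

end LeviCivita

/-- Adjugate/cofactor identity (eq. (4.14) of the paper): in dimension `D + 1 ≥ 1`,
contracting two Levi-Civita symbols over all but their first index with `D` copies
of a matrix `A` yields `D! · adjugate A`. -/
theorem eps_eps_adjugate (R : Type*) [CommRing R] (D : ℕ)
    (A : Matrix (Fin (D + 1)) (Fin (D + 1)) R) (j r : Fin (D + 1)) :
    ∑ a : Fin D → Fin (D + 1), ∑ b : Fin D → Fin (D + 1),
        eps R (Matrix.vecCons j a) * eps R (Matrix.vecCons r b)
          * ∏ m : Fin D, A (a m) (b m)
      = (D.factorial : R) * A.adjugate r j := by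
  calc
    _ = ∑ a : Fin D → Fin (D + 1), eps R (vecCons j a) *
          ∑ b : Fin D → Fin (D + 1), eps R (vecCons r b) * ∏ m, A (a m) (b m) := by
      simp_rw [Finset.mul_sum, mul_assoc]
    _ = ∑ a : Fin D → Fin (D + 1), eps R (vecCons j a) *
          (of (vecCons (Pi.single r 1) fun m => A (a m))).det :=
      Finset.sum_congr rfl fun a _ =>
        congrArg _ (sum_eps_vecCons_mul_prod r fun m => A (a m))
    _ = (∑ a : Fin D → Fin (D + 1), eps R (vecCons j a) ^ 2) * A.adjugate r j := by
      simp_rw [eps_mul_det_vecCons_single, Finset.sum_mul]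
    _ = D.factorial * A.adjugate r j := by rw [sum_eps_vecCons_sq]
end

section
/- (Tangentiality of the constrained Hodge dual.) Let D, p, q ∈ ℕ with D = p + q and q ≥ 1, let g : Matrix (Fin D) (Fin D) ℝ be symmetric and invertible with inverse g⁻¹, and let x : Fin D → ℝ. Then for every i : Fin p → Fin D, every slot s : Fin p, and every J : Fin (q−1) → Fin D: ∑_{ℓ : Fin D} ∑_{j : Fin D} ∑_{k : Fin p → Fin D} x ℓ · (∑_{c : Fin D} g⁻¹ j c · x c) · ε((j ::ᵥ J) ⊕ k) · ∏_{a : Fin p} g⁻¹ ((Function.update i s ℓ) a) (k a) = 0. This expresses that the proposed constrained Hodge dual with projection vector V = g⁻¹x annihilates the combination ∑_ℓ x^ℓ dx^ℓ inserted in any slot of the p-form, as required by the constraint x^i x^i = 1. -/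
/-!
By multilinearity of the determinant in its rows, contracting the slots of the Levi-Civita symbol
with vectors yields the determinant having those vectors as rows. Hence the constrained Hodge dual
is a determinant with `V` among its rows, and inserting `∑ ℓ, x ℓ dx^ℓ` in slot `s` replaces the row
of that slot by `x ᵥ* g⁻¹`, which is `V` since `g` is symmetric: two rows coincide.
-/

open Matrix

section

variable {R : Type*}

theorem multilinearMap_apply_eq_sum_single {ι n M : Type*} [CommSemiring R]
    [Fintype ι] [DecidableEq ι] [Fintype n] [DecidableEq n] [AddCommMonoid M]
    [Module R M] (f : MultilinearMap R (fun _ : ι => n → R) M) (v : ι → n → R) :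
    f v = ∑ k : ι → n, (∏ a, v a (k a)) • f fun a => Pi.single (k a) 1 := by
  have hv : v = fun a => ∑ j, v a j • Pi.single j 1 := funext fun a => pi_eq_sum_univ' (v a)
  conv_lhs => rw [hv, f.map_sum]
  exact Finset.sum_congr rfl fun k _ => f.map_smul_univ _ _

variable [CommRing R] {m n p q : ℕ}

theorem eps_eq_detRowAlternating_single (i : Fin n → Fin n) :
    eps R i = detRowAlternating fun a => Pi.single (i a) (1 : R) := by
  refine congrArg det (Matrix.ext fun a b => ?_)
  simp only [of_apply, Pi.single_apply, eq_comm]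

variable (R m n) in
/-- The determinant as a multilinear map of the first `m` rows with values in the multilinear maps
of the last `n` rows. It separates the rows contracted with the indices `j ::ᵥ J` from those coming
from the form. -/
def blockDet : MultilinearMap R (fun _ : Fin m => Fin (m + n) → R)
    (MultilinearMap R (fun _ : Fin n => Fin (m + n) → R) R) :=
  (detRowAlternating.domDomCongr finSumFinEquiv.symm).toMultilinearMap.currySum

theorem blockDet_apply (u : Fin m → Fin (m + n) → R) (v : Fin n → Fin (m + n) → R) :
    blockDet R m n u v = detRowAlternating (Fin.append u v) := by
  refine congrArg detRowAlternating (funext fun a => ?_)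
  cases a using Fin.addCases <;> simp

theorem blockDet_eq_zero_of_eq {u : Fin m → Fin (m + n) → R} {v : Fin n → Fin (m + n) → R}
    {a : Fin m} {b : Fin n} (h : u a = v b) : blockDet R m n u v = 0 :=
  (detRowAlternating.domDomCongr finSumFinEquiv.symm).map_eq_zero_of_eq (Sum.elim u v)
    (i := .inl a) (j := .inr b) h Sum.inl_ne_inr

theorem eps_append (I : Fin m → Fin (m + n)) (k : Fin n → Fin (m + n)) :
    eps R (Fin.append I k) =
      blockDet R m n (fun b => Pi.single (I b) 1) (fun a => Pi.single (k a) 1) := by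
  rw [eps_eq_detRowAlternating_single, blockDet_apply]
  refine congrArg detRowAlternating (funext fun a => ?_)
  cases a using Fin.addCases <;> simp

theorem sum_eps_append_mul_prod (I : Fin m → Fin (m + n)) (v : Fin n → Fin (m + n) → R) :
    ∑ k : Fin n → Fin (m + n), eps R (Fin.append I k) * ∏ a, v a (k a) =
      blockDet R m n (fun b => Pi.single (I b) 1) v := by
  simp only [multilinearMap_apply_eq_sum_single _ v, eps_append, smul_eq_mul, mul_comm]

/-- The component `J` of the constrained Hodge dual, with projection vector `V`, of the `p`-form
`dx^{i 0} ∧ ⋯ ∧ dx^{i (p - 1)}`, without normalizing factors. The matrix `A` raises the indices of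
the form (it is the inverse metric in the application); its rows may be labelled by any type. -/
def constrainedHodgeDual {ι : Type*} (A : Matrix ι (Fin (q + 1 + p)) R) (V : Fin (q + 1 + p) → R)
    (i : Fin p → ι) (J : Fin q → Fin (q + 1 + p)) : R :=
  ∑ j, ∑ k : Fin p → Fin (q + 1 + p),
    V j * eps R (Fin.append (Fin.cons j J) k) * ∏ a, A (i a) (k a)

theorem constrainedHodgeDual_eq_blockDet {ι : Type*} (A : Matrix ι (Fin (q + 1 + p)) R)
    (V : Fin (q + 1 + p) → R) (i : Fin p → ι) (J : Fin q → Fin (q + 1 + p)) :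
    constrainedHodgeDual A V i J =
      blockDet R (q + 1) p (Fin.cons V fun b => Pi.single (J b) 1) (fun a => A (i a)) := by
  set U : Fin q → Fin (q + 1 + p) → R := fun b => Pi.single (J b) 1
  have hrows (j : Fin (q + 1 + p)) :
      (fun b => Pi.single ((Fin.cons j J : Fin (q + 1) → Fin (q + 1 + p)) b) (1 : R)) =
        (Fin.cons (Pi.single j 1) U : Fin (q + 1) → Fin (q + 1 + p) → R) :=
    funext <| Fin.cases rfl fun _ => rfl
  calc constrainedHodgeDual A V i J
      = ∑ j, V j • (blockDet R (q + 1) p).curryLeft (Pi.single j 1) U fun a => A (i a) := by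
        simp only [constrainedHodgeDual, mul_assoc, ← Finset.mul_sum,
          sum_eps_append_mul_prod _ fun a => A (i a), hrows, MultilinearMap.curryLeft_apply,
          smul_eq_mul]
    _ = (blockDet R (q + 1) p).curryLeft V U fun a => A (i a) := by
        conv_rhs => rw [pi_eq_sum_univ' V, map_sum]
        simp [Pi.single]

theorem constrained_hodge_tangential_general {ι : Type*} [Fintype ι]
    (A : Matrix ι (Fin (q + 1 + p)) R) (x : ι → R) (i : Fin p → ι) (s : Fin p)
    (J : Fin q → Fin (q + 1 + p)) :
    ∑ ℓ, x ℓ * constrainedHodgeDual A (x ᵥ* A) (Function.update i s ℓ) J = 0 := by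
  set u : Fin (q + 1) → Fin (q + 1 + p) → R := Fin.cons (x ᵥ* A) fun b => Pi.single (J b) 1
  have hrow (ℓ : ι) : (fun a => A (Function.update i s ℓ a)) =
      Function.update (fun a => A (i a)) s (A ℓ) :=
    Function.comp_update A i s ℓ
  calc ∑ ℓ, x ℓ * constrainedHodgeDual A (x ᵥ* A) (Function.update i s ℓ) J
      = ∑ ℓ, blockDet R (q + 1) p u (Function.update (fun a => A (i a)) s (x ℓ • A ℓ)) := by
        simp only [constrainedHodgeDual_eq_blockDet, hrow, MultilinearMap.map_update_smul,
          smul_eq_mul, u]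
    _ = blockDet R (q + 1) p u (Function.update (fun a => A (i a)) s (x ᵥ* A)) := by
        rw [vecMul_eq_sum, MultilinearMap.map_update_sum]
    _ = 0 := blockDet_eq_zero_of_eq (a := 0) (b := s) (by simp [u])

end

/-- Tangentiality of the constrained Hodge dual: in dimension `D = p + (q+1)`
(written `q + 1 + p` to match the index block structure, with `q` playing the role
of `q - 1`), the proposed constrained Hodge dual with projection vector `V = g⁻¹ x`
annihilates the combination `∑ ℓ, x ℓ dx^ℓ` inserted in any slot `s` of the
`p`-form, as required by the constraint `xⁱ xⁱ = 1`. -/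
theorem constrained_hodge_tangential (p q : ℕ)
    (g : Matrix (Fin (q + 1 + p)) (Fin (q + 1 + p)) ℝ)
    (hsymm : g.IsSymm) (hg : IsUnit g.det)
    (x : Fin (q + 1 + p) → ℝ)
    (i : Fin p → Fin (q + 1 + p)) (s : Fin p) (J : Fin q → Fin (q + 1 + p)) :
    ∑ ℓ : Fin (q + 1 + p), ∑ j : Fin (q + 1 + p), ∑ k : Fin p → Fin (q + 1 + p),
        x ℓ * (∑ c : Fin (q + 1 + p), g⁻¹ j c * x c)
          * eps ℝ (Fin.append (Fin.cons j J) k)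
          * ∏ a : Fin p, g⁻¹ (Function.update i s ℓ a) (k a) = 0 := by
  have hV (j) : ∑ c, g⁻¹ j c * x c = (x ᵥ* g⁻¹) j := by
    rw [← mulVec_transpose, hsymm.inv.eq, mulVec, dotProduct]
  simpa only [constrainedHodgeDual, hV, Finset.mul_sum, mul_assoc] using
    constrained_hodge_tangential_general g⁻¹ x i s J
end
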